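/- Let Ω ⊆ ℝ^d be Lebesgue-measurable and let p(·) : Ω → (0,∞) be a measurable exponent function with p_- > 0 and p_+ < ∞. Then for every 0 < t < μ(Ω), the growth envelope function of L_{p(·)} satisfies E_G(L_{p(·)})(t) ≥ sup{ ‖χ_{A}‖_{p(·)}^{-1} : A ⊆ Ω measurable, μ(A) = t }. -/

import Mathlib

open MeasureTheory ENNReal Set Filter

noncomputable section

/-- One-variable `L_p` quasi-norm of an `ℝ≥0∞`-valued function (essential sup if `p = ∞`). -/
def lpNorm1 {α : Type} [MeasurableSpace α] (p : ℝ≥0∞) (μ : Measure α)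
    (g : α → ℝ≥0∞) : ℝ≥0∞ :=
  if p = ∞ then essSup g μ else (∫⁻ x, g x ^ p.toReal ∂μ) ^ (1 / p.toReal)

/-- Mixed Lebesgue quasi-norm of an `ℝ≥0∞`-valued function on a product space:
the first coordinate is integrated innermost. -/
def mixedNormE : {d : ℕ} → {α : Fin d → Type} →
    [inst : ∀ i, MeasurableSpace (α i)] → (μ : ∀ i, Measure (α i)) →
    (p : Fin d → ℝ≥0∞) → ((∀ i, α i) → ℝ≥0∞) → ℝ≥0∞
  | 0, _, _, _, _, f => f finZeroElim
  | (d + 1), α, inst, μ, p, f =>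
      @mixedNormE d (fun i => α i.succ) (fun i => inst i.succ)
        (fun i => μ i.succ) (fun i => p i.succ)
        (fun y => lpNorm1 (p 0) (μ 0) fun x => f (Fin.cons x y))

/-- Mixed Lebesgue quasi-norm `‖f‖_{p⃗}` of a real-valued function. -/
def mixedNorm {d : ℕ} {α : Fin d → Type} [∀ i, MeasurableSpace (α i)]
    (μ : ∀ i, Measure (α i)) (p : Fin d → ℝ≥0∞) (f : (∀ i, α i) → ℝ) : ℝ≥0∞ :=
  mixedNormE μ p fun x => ENNReal.ofReal |f x|

/-- Mixed Lorentz quasi-norm `‖f‖_{L_{p⃗,q}}`. -/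
def mixedLorentzNorm {d : ℕ} {α : Fin d → Type} [∀ i, MeasurableSpace (α i)]
    (μ : ∀ i, Measure (α i)) (p : Fin d → ℝ≥0∞) (q : ℝ≥0∞) (f : (∀ i, α i) → ℝ) : ℝ≥0∞ :=
  if q = ∞ then
    ⨆ (u : ℝ) (_ : 0 < u),
      ENNReal.ofReal u * mixedNorm μ p ({x | u < |f x|}.indicator fun _ => (1 : ℝ))
  else
    (∫⁻ u in Set.Ioi (0 : ℝ),
        (ENNReal.ofReal u * mixedNorm μ p ({x | u < |f x|}.indicator fun _ => (1 : ℝ))) ^ q.toReal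
          / ENNReal.ofReal u) ^ (1 / q.toReal)

/-- Non-increasing rearrangement `f^*(t)` (with `inf ∅ = ∞`). -/
def rearr {α : Type} [MeasurableSpace α] (μ : Measure α) (f : α → ℝ) (t : ℝ) : ℝ≥0∞ :=
  sInf {s : ℝ≥0∞ | μ {x | s < ENNReal.ofReal |f x|} ≤ ENNReal.ofReal t}

/-- Growth envelope function of the quasi-normed function space given by the quasi-norm `N`. -/
def growthEnv {α : Type} [MeasurableSpace α] (μ : Measure α)
    (N : (α → ℝ) → ℝ≥0∞) (t : ℝ) : ℝ≥0∞ :=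
  ⨆ (f : α → ℝ) (_ : Measurable f) (_ : N f ≤ 1), rearr μ f t

/-- The Hardy-type functional `( ∫_0^ε ( t^{pinv} f^*(t) )^v dt/t )^{1/v}`,
with the usual `sup` modification for `v = ∞`. -/
def hardy {α : Type} [MeasurableSpace α] (μ : Measure α)
    (pinv : ℝ) (v : ℝ≥0∞) (ε : ℝ) (f : α → ℝ) : ℝ≥0∞ :=
  if v = ∞ then ⨆ (t : ℝ) (_ : t ∈ Set.Ioo 0 ε), ENNReal.ofReal t ^ pinv * rearr μ f t
  else
    (∫⁻ t in Set.Ioo (0 : ℝ) ε,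
        (ENNReal.ofReal t ^ pinv * rearr μ f t) ^ v.toReal / ENNReal.ofReal t) ^ (1 / v.toReal)

/-- The modular `ϱ_{p(·)}(f) = ∫ |f(x)|^{p(x)} dμ(x)`. -/
def varModular {α : Type} [MeasurableSpace α] (μ : Measure α)
    (p : α → ℝ) (f : α → ℝ) : ℝ≥0∞ :=
  ∫⁻ x, ENNReal.ofReal (|f x| ^ p x) ∂μ

/-- The variable Lebesgue quasi-norm `‖f‖_{p(·)}`. -/
def varNorm {α : Type} [MeasurableSpace α] (μ : Measure α)
    (p : α → ℝ) (f : α → ℝ) : ℝ≥0∞ :=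
  ⨅ (l : ℝ) (_ : 0 < l) (_ : varModular μ p (fun x => f x / l) ≤ 1), ENNReal.ofReal l

/-- The variable Lorentz quasi-norm `‖f‖_{L_{p(·),q}}`. -/
def varLorentzNorm {α : Type} [MeasurableSpace α] (μ : Measure α)
    (p : α → ℝ) (q : ℝ≥0∞) (f : α → ℝ) : ℝ≥0∞ :=
  if q = ∞ then
    ⨆ (u : ℝ) (_ : 0 < u),
      ENNReal.ofReal u * varNorm μ p ({x | u < |f x|}.indicator fun _ => (1 : ℝ))
  else
    (∫⁻ u in Set.Ioi (0 : ℝ),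
        (ENNReal.ofReal u * varNorm μ p ({x | u < |f x|}.indicator fun _ => (1 : ℝ))) ^ q.toReal
          / ENNReal.ofReal u) ^ (1 / q.toReal)

/-- Local log-Hölder continuity at a point `x₀`. -/
def LocLogHolderAt {E : Type} [PseudoMetricSpace E] (p : E → ℝ) (x₀ : E) : Prop :=
  ∃ C₀ > (0 : ℝ), ∀ x, dist x x₀ < 1 / 2 → |p x - p x₀| ≤ C₀ / (-Real.log (dist x x₀))

/-- Local log-Hölder continuity (at every point, with a uniform constant). -/
def LocLogHolder {E : Type} [PseudoMetricSpace E] (p : E → ℝ) : Prop :=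
  ∃ C₀ > (0 : ℝ), ∀ x y, dist x y < 1 / 2 → |p x - p y| ≤ C₀ / (-Real.log (dist x y))

end

/-!
Let `c < ‖χ_A‖⁻¹` with `μ A = t < μ Ω`. Then the modular of `c χ_A` is strictly smaller than `1`,
and this slack lets one enlarge `A` by a small set `D ⊆ Ω \ A` of positive measure while keeping
`‖c χ_{A ∪ D}‖ ≤ 1`. Since `μ (A ∪ D) > t`, the rearrangement of `c χ_{A ∪ D}` at `t` is at least
`c` (that of `c χ_A` itself vanishes at `t`). The set `D` is found inside a sublevel set of
`c ^ p(·)`, on which the integrand is bounded.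
-/

/-- A measure is atomless if every measurable set of nonzero measure contains a measurable set of
strictly smaller nonzero measure. This is what lets sets be enlarged by arbitrarily little;
`NullSingletonClass` only excludes atoms that are points. -/
def IsAtomless {α : Type*} [MeasurableSpace α] (μ : Measure α) : Prop :=
  ∀ ⦃S : Set α⦄, MeasurableSet S → μ S ≠ 0 → ∃ D ⊆ S, MeasurableSet D ∧ μ D ≠ 0 ∧ μ D < μ S

namespace IsAtomless

variable {α : Type*} [MeasurableSpace α] {μ : Measure α}

theorem of_nullSingletonClass [TopologicalSpace α] [SecondCountableTopology α]
    [OpensMeasurableSpace α] [NullSingletonClass μ] [μ.OuterRegular] : IsAtomless μ := by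
  intro S hS hS0
  obtain ⟨x, _, hx⟩ := exists_mem_forall_mem_nhdsWithin_pos_measure hS0
  obtain ⟨U, hxU, hU, hUS⟩ :=
    Set.exists_isOpen_lt_of_lt (μ := μ) {x} (μ S) (by simpa [pos_iff_ne_zero] using hS0)
  exact ⟨S ∩ U, inter_subset_left, hS.inter hU.measurableSet,
    (hx _ (inter_mem_nhdsWithin S (hU.mem_nhds (hxU rfl)))).ne',
    (measure_mono inter_subset_right).trans_lt hUS⟩

protected theorem restrict (hμ : IsAtomless μ) {Ω : Set α} (hΩ : MeasurableSet Ω) :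
    IsAtomless (μ.restrict Ω) := by
  intro S hS hS0
  rw [Measure.restrict_apply hS] at hS0
  obtain ⟨D, hDS, hD, hD0, hDlt⟩ := hμ (hS.inter hΩ) hS0
  refine ⟨D, hDS.trans inter_subset_left, hD, ?_⟩
  rw [Measure.restrict_apply hD, Measure.restrict_apply hS,
    inter_eq_left.2 (hDS.trans inter_subset_right)]
  exact ⟨hD0, hDlt⟩

theorem exists_subset_measure_lt (hμ : IsAtomless μ) {S : Set α} (hS : MeasurableSet S)
    (hS0 : μ S ≠ 0) {ε : ℝ≥0∞} (hε : ε ≠ 0) :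
    ∃ D ⊆ S, MeasurableSet D ∧ μ D ≠ 0 ∧ μ D < ε := by
  by_contra! hlarge
  let sizes : Set ℝ≥0∞ := {m | ∃ D ⊆ S, MeasurableSet D ∧ μ D ≠ 0 ∧ μ D = m}
  have hinf_ne_zero : sInf sizes ≠ 0 := by
    refine ((pos_iff_ne_zero.2 hε).trans_le (le_sInf ?_)).ne'
    rintro _ ⟨D, hDS, hD, hD0, rfl⟩
    exact hlarge D hDS hD hD0
  have hinf_le : ∀ D ⊆ S, MeasurableSet D → μ D ≠ 0 → sInf sizes ≤ μ D :=
    fun D hDS hD hD0 => sInf_le ⟨D, hDS, hD, hD0, rfl⟩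
  have hinf_top : sInf sizes ≠ ∞ := by
    obtain ⟨D, hDS, hD, hD0, hDlt⟩ := hμ hS hS0
    exact ((hinf_le D hDS hD hD0).trans_lt hDlt).ne_top
  -- A set of almost minimal measure splits into two pieces, which cannot both reach the infimum.
  obtain ⟨_, ⟨D, hDS, hD, hD0, rfl⟩, hDlt⟩ : ∃ m ∈ sizes, m < sInf sizes + sInf sizes :=
    sInf_lt_iff.1 (ENNReal.lt_add_right hinf_top hinf_ne_zero)
  obtain ⟨E, hED, hE, hE0, hElt⟩ := hμ hD hD0
  have hdiff0 : μ (D \ E) ≠ 0 :=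
    ((tsub_pos_of_lt hElt).trans_le le_measure_sdiff).ne'
  refine hDlt.not_ge ?_
  calc sInf sizes + sInf sizes
      ≤ μ E + μ (D \ E) := add_le_add (hinf_le E (hED.trans hDS) hE hE0)
        (hinf_le (D \ E) (sdiff_subset.trans hDS) (hD.diff hE) hdiff0)
    _ = μ D := by
      rw [measure_add_sdiff hE.nullMeasurableSet, union_eq_self_of_subset_left hED]

theorem exists_subset_setLIntegral_le (hμ : IsAtomless μ) {S : Set α} (hS : MeasurableSet S)
    (hS0 : μ S ≠ 0) {g : α → ℝ≥0∞} (hg : AEMeasurable g μ) (hg_top : ∀ x ∈ S, g x ≠ ∞)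
    {ε : ℝ≥0∞} (hε : ε ≠ 0) :
    ∃ D ⊆ S, MeasurableSet D ∧ μ D ≠ 0 ∧ ∫⁻ x in D, g x ∂μ ≤ ε := by
  have hcover : S ⊆ ⋃ n : ℕ, S ∩ {x | g x ≤ n} := fun x hx =>
    let ⟨n, hn⟩ := ENNReal.exists_nat_gt (hg_top x hx)
    mem_iUnion.2 ⟨n, hx, hn.le⟩
  obtain ⟨n, hn⟩ := exists_measure_pos_of_not_measure_iUnion_null
    ((pos_iff_ne_zero.2 hS0).trans_le (measure_mono hcover)).ne'
  obtain ⟨T, hTsub, hT, hTae⟩ := (hS.nullMeasurableSet.inter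
    (nullMeasurableSet_le hg aemeasurable_const)).exists_measurable_subset_ae_eq
  obtain ⟨D, hDT, hD, hD0, hDlt⟩ := hμ.exists_subset_measure_lt hT
    (measure_congr hTae ▸ hn.ne') (ENNReal.div_pos hε (ENNReal.natCast_ne_top n)).ne'
  refine ⟨D, fun x hx => (hTsub (hDT hx)).1, hD, hD0, ?_⟩
  calc ∫⁻ x in D, g x ∂μ
      ≤ ∫⁻ _ in D, n ∂μ := setLIntegral_mono' hD fun x hx => (hTsub (hDT hx)).2
    _ = n * μ D := setLIntegral_const ..
    _ ≤ ε := ENNReal.mul_le_of_le_div' hDlt.le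

end IsAtomless

section VariableLebesgue

variable {α : Type} [MeasurableSpace α] {μ : Measure α} {p : α → ℝ}

theorem varNorm_lt_iff {f : α → ℝ} {a : ℝ≥0∞} :
    varNorm μ p f < a ↔
      ∃ l : ℝ, 0 < l ∧ varModular μ p (fun x => f x / l) ≤ 1 ∧ ENNReal.ofReal l < a := by
  simp only [varNorm, iInf_lt_iff, exists_prop]

theorem varNorm_le_one_of_varModular_le_one {f : α → ℝ} (hf : varModular μ p f ≤ 1) :
    varNorm μ p f ≤ 1 :=
  iInf₂_le_of_le 1 one_pos (iInf_le_of_le (by simpa only [div_one] using hf) ofReal_one.le)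

theorem varModular_indicator_const (hp0 : ∀ᵐ x ∂μ, 0 < p x) {B : Set α} (hB : MeasurableSet B)
    (c : ℝ) :
    varModular μ p (B.indicator fun _ => c) = ∫⁻ x in B, ENNReal.ofReal (|c| ^ p x) ∂μ := by
  rw [varModular, ← lintegral_indicator hB]
  refine lintegral_congr_ae (hp0.mono fun x hx => ?_)
  by_cases hxB : x ∈ B
  · simp only [indicator_of_mem hxB]
  · simp only [indicator_of_notMem hxB, abs_zero, Real.zero_rpow hx.ne', ofReal_zero]

theorem setLIntegral_rpow_lt_one_of_lt_inv_varNorm (hp : AEMeasurable p μ)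
    (hp0 : ∀ᵐ x ∂μ, 0 < p x) {A : Set α} (hA : MeasurableSet A) {c : ℝ}
    (hc : ENNReal.ofReal |c| < (varNorm μ p (A.indicator fun _ => (1 : ℝ)))⁻¹) :
    ∫⁻ x in A, ENNReal.ofReal (|c| ^ p x) ∂μ < 1 := by
  obtain ⟨l, hl, hmod, hlc⟩ := varNorm_lt_iff.1 (ENNReal.lt_inv_iff_lt_inv.1 hc)
  have hcl : |c| < |1 / l| := by
    rw [ENNReal.lt_inv_iff_lt_inv, ← ENNReal.ofReal_inv_of_pos hl] at hlc
    simpa [abs_of_pos hl] using (ENNReal.ofReal_lt_ofReal_iff (inv_pos.2 hl)).1 hlc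
  have hscaled : ∫⁻ x in A, ENNReal.ofReal (|1 / l| ^ p x) ∂μ ≤ 1 := by
    have hdiv : (fun x => A.indicator (fun _ => (1 : ℝ)) x / l) = A.indicator fun _ => 1 / l := by
      ext x
      simp only [div_eq_mul_inv, indicator_mul_const]
    rwa [← varModular_indicator_const hp0 hA, ← hdiv]
  have hlt : ∀ᵐ x ∂μ.restrict A, ENNReal.ofReal (|c| ^ p x) < ENNReal.ofReal (|1 / l| ^ p x) :=
    (ae_restrict_of_ae hp0).mono fun x hx =>
      (ENNReal.ofReal_lt_ofReal_iff_of_nonneg (by positivity)).2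
        (Real.rpow_lt_rpow (abs_nonneg c) hcl hx)
  rcases eq_or_ne (μ A) 0 with hA0 | hA0
  · simp only [setLIntegral_measure_zero A _ hA0, zero_lt_one]
  · exact (lintegral_strict_mono (Measure.restrict_eq_zero.not.2 hA0) (by fun_prop)
      (((lintegral_mono_ae (hlt.mono fun _ => le_of_lt)).trans hscaled).trans_lt one_lt_top).ne
      hlt).trans_le hscaled

theorem exists_measure_lt_varNorm_indicator_le_one (hμ : IsAtomless μ) (hp : AEMeasurable p μ)
    (hp0 : ∀ᵐ x ∂μ, 0 < p x) {A : Set α} (hA : MeasurableSet A) (hA_lt : μ A < μ univ) {c : ℝ}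
    (hc : ∫⁻ x in A, ENNReal.ofReal (|c| ^ p x) ∂μ < 1) :
    ∃ B, MeasurableSet B ∧ μ A < μ B ∧ varNorm μ p (B.indicator fun _ => c) ≤ 1 := by
  have hcompl : μ Aᶜ ≠ 0 := fun h => hA_lt.ne (measure_eq_measure_of_null_sdiff (subset_univ A)
    (by rwa [← compl_eq_univ_sdiff]))
  obtain ⟨D, hDA, hD, hD0, hDle⟩ := hμ.exists_subset_setLIntegral_le hA.compl hcompl
    (g := fun x => ENNReal.ofReal (|c| ^ p x)) (by fun_prop) (fun _ _ => ofReal_ne_top)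
    (tsub_pos_of_lt hc).ne'
  have hdisj : Disjoint A D := subset_compl_iff_disjoint_left.1 hDA
  refine ⟨A ∪ D, hA.union hD, ?_, varNorm_le_one_of_varModular_le_one ?_⟩
  · rw [measure_union hdisj hD]
    exact ENNReal.lt_add_right hA_lt.ne_top hD0
  · rw [varModular_indicator_const hp0 (hA.union hD), lintegral_union hD hdisj]
    exact (add_le_add_right hDle _).trans_eq (add_tsub_cancel_of_le hc.le)

theorem le_rearr_indicator_const {B : Set α} {t : ℝ} (ht : ENNReal.ofReal t < μ B) (c : ℝ) :
    ENNReal.ofReal |c| ≤ rearr μ (B.indicator fun _ => c) t := by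
  refine le_sInf fun s hs => le_of_not_gt fun hsc => ht.not_ge (le_trans (measure_mono ?_) hs)
  intro x hx
  simpa only [mem_ofPred_eq, indicator_of_mem hx] using hsc

theorem rearr_le_growthEnv {N : (α → ℝ) → ℝ≥0∞} {f : α → ℝ} (hf : Measurable f) (hNf : N f ≤ 1)
    (t : ℝ) : rearr μ f t ≤ growthEnv μ N t :=
  le_iSup_of_le f (le_iSup₂_of_le hf hNf le_rfl)

theorem inv_varNorm_indicator_le_growthEnv (hμ : IsAtomless μ) (hp : AEMeasurable p μ)
    (hp0 : ∀ᵐ x ∂μ, 0 < p x) {A : Set α} (hA : MeasurableSet A) (hA_lt : μ A < μ univ) {t : ℝ}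
    (ht : ENNReal.ofReal t ≤ μ A) :
    (varNorm μ p (A.indicator fun _ => (1 : ℝ)))⁻¹ ≤ growthEnv μ (varNorm μ p) t := by
  refine ENNReal.le_of_forall_nnreal_lt fun c hc => ?_
  have hc_abs : ENNReal.ofReal |(c : ℝ)| = c := by simp only [NNReal.abs_eq, ofReal_coe_nnreal]
  rw [← hc_abs] at hc ⊢
  obtain ⟨B, hB, hAB, hBnorm⟩ := exists_measure_lt_varNorm_indicator_le_one hμ hp hp0 hA hA_lt
    (setLIntegral_rpow_lt_one_of_lt_inv_varNorm hp hp0 hA hc)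
  exact (le_rearr_indicator_const (ht.trans_lt hAB) c).trans
    (rearr_le_growthEnv (measurable_const.indicator hB) hBnorm t)

theorem statement10_general (hμ : IsAtomless μ) {Ω : Set α} (hΩ : MeasurableSet Ω)
    (hp : AEMeasurable p (μ.restrict Ω)) (hp0 : ∀ᵐ x ∂μ.restrict Ω, 0 < p x) {t : ℝ}
    (htΩ : ENNReal.ofReal t < μ Ω) :
    (⨆ (A : Set α) (_ : MeasurableSet A) (_ : A ⊆ Ω) (_ : μ A = ENNReal.ofReal t),
        (varNorm (μ.restrict Ω) p (A.indicator fun _ => (1 : ℝ)))⁻¹) ≤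
      growthEnv (μ.restrict Ω) (varNorm (μ.restrict Ω) p) t := by
  refine iSup₂_le fun A hA => iSup₂_le fun hAΩ hAt => ?_
  have hAmeas : μ.restrict Ω A = ENNReal.ofReal t := by
    rw [Measure.restrict_apply hA, inter_eq_left.2 hAΩ, hAt]
  refine inv_varNorm_indicator_le_growthEnv (hμ.restrict hΩ) hp hp0 hA ?_ hAmeas.ge
  rwa [hAmeas, Measure.restrict_apply_univ]

end VariableLebesgue

theorem measure_eq_zero_of_measure_lt {α : Type*} [MeasurableSpace α] [Subsingleton α]
    {μ : Measure α} {A B : Set α} (hlt : μ A < μ B) : μ A = 0 := by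
  rcases A.eq_empty_or_nonempty with rfl | hA
  · exact measure_empty
  · rw [Subsingleton.eq_univ_of_nonempty hA] at hlt
    exact absurd (measure_mono (subset_univ B)) hlt.not_ge

/-- Lower bound for the growth envelope function of the variable Lebesgue
space: `E_G(L_{p(·)})(t) ≥ sup{ ‖χ_A‖_{p(·)}⁻¹ : A ⊆ Ω measurable, μ(A) = t }`
for `0 < t < μ(Ω)`. -/
theorem statement10 (d : ℕ) (Ω : Set (EuclideanSpace ℝ (Fin d))) (hΩ : MeasurableSet Ω)
    (p : EuclideanSpace ℝ (Fin d) → ℝ) (hpmeas : Measurable p) (hp0 : ∀ x ∈ Ω, 0 < p x)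
    (hpm : 0 < essInf p (volume.restrict Ω))
    (hpp : IsBoundedUnder (· ≤ ·) (ae (volume.restrict Ω)) p)
    (t : ℝ) (ht : 0 < t) (htΩ : ENNReal.ofReal t < volume Ω) :
    (⨆ (A : Set (EuclideanSpace ℝ (Fin d))) (_ : MeasurableSet A) (_ : A ⊆ Ω)
        (_ : volume A = ENNReal.ofReal t),
        (varNorm (volume.restrict Ω) p (A.indicator fun _ => (1 : ℝ)))⁻¹) ≤
      growthEnv (volume.restrict Ω) (varNorm (volume.restrict Ω) p) t := by
  rcases eq_zero_or_neZero d with rfl | _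
  -- On `ℝ⁰` Lebesgue measure is a point mass, hence not atomless, but no `A` is admissible.
  · refine iSup₂_le fun A _ => iSup₂_le fun _ hAt => ?_
    have hA0 := measure_eq_zero_of_measure_lt (hAt ▸ htΩ)
    exact absurd (hAt.symm.trans hA0) (ENNReal.ofReal_pos.2 ht).ne'
  · exact statement10_general .of_nullSingletonClass hΩ hpmeas.aemeasurable
      (ae_restrict_of_forall_mem hΩ hp0) htΩ
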